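/- For all integers d, k with 1 < k < d, the growth constant of (d,k)-self-avoiding manifolds exists: the limit μ^SAM_{(d,k)} = lim_{n→∞} (c^SAM_{(d,k),n})^{1/n} exists. -/

import Mathlib

open Filter

/-- A `k`-face of the hypercubic lattice `ℤ^d`: an orientation set `S ⊆ {1,…,d}`
together with a base vertex `v ∈ ℤ^d`. -/
abbrev Face (d : ℕ) := Finset (Fin d) × (Fin d → ℤ)

/-- The boundary `(k-1)`-edges of a `k`-face `(S, v)`: the `(k-1)`-faces
`(S \ {i}, v)` and `(S \ {i}, v + e_i)` for `i ∈ S`. -/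
def faceEdges {d : ℕ} (f : Face d) : Finset (Face d) :=
  f.1.biUnion fun i =>
    {(f.1.erase i, f.2), (f.1.erase i, f.2 + Pi.single i 1)}

/-- Two faces are adjacent if they are distinct and share a common boundary edge. -/
def FaceAdj {d : ℕ} (f g : Face d) : Prop :=
  f ≠ g ∧ ∃ e, e ∈ faceEdges f ∧ e ∈ faceEdges g

/-- A set of faces is connected with respect to adjacency. -/
def ConnectedFaces {d : ℕ} (M : Finset (Face d)) : Prop :=
  ∀ f ∈ M, ∀ g ∈ M, Relation.ReflTransGen (fun a b => a ∈ M ∧ b ∈ M ∧ FaceAdj a b) f g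

/-- A `(d,k)`-self-avoiding manifold of `k`-area `n`: a connected set of `n` `k`-faces
such that every `(k-1)`-edge bounds at most two of its `k`-faces. -/
def IsSAM (d k n : ℕ) (M : Finset (Face d)) : Prop :=
  M.card = n ∧ (∀ f ∈ M, f.1.card = k) ∧ ConnectedFaces M ∧
    ∀ e : Face d, (M.filter fun f => e ∈ faceEdges f).card ≤ 2

/-- A closed `(d,k)`-self-avoiding manifold: every boundary edge of every face
is shared by exactly two faces. -/
def IsClosedSAM (d k n : ℕ) (M : Finset (Face d)) : Prop :=
  IsSAM d k n M ∧ ∀ f ∈ M, ∀ e ∈ faceEdges f,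
    (M.filter fun g => e ∈ faceEdges g).card = 2

/-- A `(d,k)`-fixed polyominoid of `k`-area `n`: a connected set of `n` `k`-faces. -/
def IsXD (d k n : ℕ) (M : Finset (Face d)) : Prop :=
  M.card = n ∧ (∀ f ∈ M, f.1.card = k) ∧ ConnectedFaces M

/-- Translation of a face by a lattice vector. -/
def translateFace {d : ℕ} (t : Fin d → ℤ) (f : Face d) : Face d := (f.1, f.2 + t)

/-- Two sets of faces are translation-equivalent. -/
def TransEquiv {d : ℕ} (A B : Finset (Face d)) : Prop :=
  ∃ t : Fin d → ℤ, A.image (translateFace t) = B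

/-- The number of `(d,k)`-self-avoiding manifolds of `k`-area `n`, up to translation. -/
noncomputable def samCount (d k n : ℕ) : ℕ :=
  Nat.card (Quot fun A B : {M : Finset (Face d) // IsSAM d k n M} =>
    TransEquiv A.val B.val)

/-- The number of closed `(d,k)`-self-avoiding manifolds of `k`-area `n`, up to
translation. -/
noncomputable def closedSamCount (d k n : ℕ) : ℕ :=
  Nat.card (Quot fun A B : {M : Finset (Face d) // IsClosedSAM d k n M} =>
    TransEquiv A.val B.val)

/-- The number of `(d,k)`-fixed polyominoids of `k`-area `n`, up to translation. -/
noncomputable def xdCount (d k n : ℕ) : ℕ :=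
  Nat.card (Quot fun A B : {M : Finset (Face d) // IsXD d k n M} =>
    TransEquiv A.val B.val)

/-!
Fix a direction `i` and call a manifold capped if a fixed face parallel to `i` is its unique
highest face. Two capped manifolds can be joined by reflecting one of them in the hyperplane on top
of its cap; the result determines both of them, so the number `q` of capped manifolds satisfies
`q m * q n ≤ c (m + n)`. Conversely every manifold can be capped at a bounded cost: if its highest
face is parallel to `i`, a cap is added on it; otherwise that face is replaced by the side faces of
the unit cube standing on it, which are connected since `1 < k`, and a cap is added on one of them.
Hence `c n ≤ K * q (n + a)`. A walk around a spanning tree shows that `c` grows at most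
exponentially, and Fekete's lemma applied to `log q` gives the limit.
-/

section Limits

theorem tendsto_add_div_nat_iff {f : ℕ → ℝ} {L : ℝ} (s : ℕ) :
    Tendsto (fun n : ℕ => f (n + s) / n) atTop (nhds L) ↔
      Tendsto (fun n : ℕ => f n / n) atTop (nhds L) := by
  have hratio : Tendsto (fun n : ℕ => (n : ℝ) / (n + s)) atTop (nhds 1) :=
    tendsto_natCast_div_add_atTop (s : ℝ)
  have hratio' : Tendsto (fun n : ℕ => ((n : ℝ) + s) / n) atTop (nhds 1) := by
    simpa only [inv_div, inv_one] using hratio.inv₀ one_ne_zero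
  rw [← tendsto_add_atTop_iff_nat (f := fun n : ℕ => f n / n) s]
  constructor <;> intro h
  · refine (mul_one L ▸ h.mul hratio).congr' ?_
    filter_upwards [eventually_ge_atTop 1] with n hn
    have hn' : (n : ℝ) ≠ 0 := by positivity
    push_cast
    field_simp
  · refine (mul_one L ▸ h.mul hratio').congr' ?_
    filter_upwards [eventually_ge_atTop 1] with n hn
    have hns : (n : ℝ) + s ≠ 0 := by positivity
    push_cast
    field_simp

theorem exists_tendsto_div_of_add_le_shift {f : ℕ → ℝ} {a : ℕ} {C : ℝ} (hmono : Monotone f)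
    (hadd : ∀ m n, f m + f n ≤ f (m + n + a) + C)
    (hbdd : BddAbove (Set.range fun n : ℕ => f n / n)) :
    ∃ L, Tendsto (fun n : ℕ => f n / n) atTop (nhds L) := by
  set M : ℝ := |C| + |f 0|
  have hC : C ≤ M := (le_abs_self C).trans (le_add_of_nonneg_right (abs_nonneg _))
  have hf0 : f 0 ≤ M := (le_abs_self _).trans (le_add_of_nonneg_left (abs_nonneg _))
  have hM0 : 0 ≤ M := by positivity
  have hshort (m n : ℕ) (hm : m ≤ a) : f (m - a) + f (n - a) ≤ f (m + n - a) + M := by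
    have : f (n - a) ≤ f (m + n - a) := hmono (by omega)
    rw [Nat.sub_eq_zero_of_le hm]
    linarith
  have hsub : Subadditive fun n => M - f (n - a) := by
    intro m n
    suffices f (m - a) + f (n - a) ≤ f (m + n - a) + M by linarith
    rcases le_total m a with hm | hm
    · exact hshort m n hm
    rcases le_total n a with hn | hn
    · linarith [add_comm m n ▸ hshort n m hn]
    · have := hadd (m - a) (n - a)
      rw [show m - a + (n - a) + a = m + n - a by omega] at this
      linarith
  have hbelow : BddBelow (Set.range fun n : ℕ => (M - f (n - a)) / n) := by
    obtain ⟨B, hB⟩ := hbdd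
    refine ⟨-B, ?_⟩
    rintro _ ⟨n, rfl⟩
    calc -B ≤ -(f n / n) := neg_le_neg (hB ⟨n, rfl⟩)
      _ = -f n / n := (neg_div _ _).symm
      _ ≤ (M - f (n - a)) / n := by
        gcongr
        linarith [hmono (Nat.sub_le n a)]
  refine ⟨0 - hsub.lim, ?_⟩
  have hshift : Tendsto (fun n : ℕ => f (n - a) / n) atTop (nhds (0 - hsub.lim)) :=
    ((tendsto_const_div_atTop_nhds_zero_nat M).sub (hsub.tendsto_lim hbelow)).congr
      fun n => by ring
  simpa only [Nat.add_sub_cancel] using (tendsto_add_div_nat_iff a).2 hshift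

theorem exists_tendsto_div_of_sandwich {f g : ℕ → ℝ} {a : ℕ} {C : ℝ} (hmono : Monotone f)
    (hf0 : 0 ≤ f 0) (hfg : ∀ m n, f m + f n ≤ g (m + n)) (hgf : ∀ n, g n ≤ f (n + a) + C)
    (hbdd : BddAbove (Set.range fun n : ℕ => g n / n)) :
    ∃ L, Tendsto (fun n : ℕ => g n / n) atTop (nhds L) := by
  have hle (n : ℕ) : f n / n ≤ g n / n := by
    gcongr
    linarith [hfg 0 n, congrArg g (zero_add n)]
  obtain ⟨L, hL⟩ := exists_tendsto_div_of_add_le_shift hmono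
    (fun m n => (hfg m n).trans (hgf _)) (hbdd.range_mono _ hle)
  have hupper : Tendsto (fun n : ℕ => f (n + a) / n + C / n) atTop (nhds L) := by
    simpa only [add_zero] using
      ((tendsto_add_div_nat_iff a).2 hL).add (tendsto_const_div_atTop_nhds_zero_nat C)
  refine ⟨L, tendsto_of_tendsto_of_tendsto_of_le_of_le hL hupper hle fun n => ?_⟩
  rw [← add_div]
  gcongr
  exact hgf n

theorem bddAbove_range_log_div {c : ℕ → ℝ} {D B : ℝ} (hc : ∀ n, 0 < c n)
    (hexp : ∀ n, c n ≤ D * B ^ n) :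
    BddAbove (Set.range fun n : ℕ => Real.log (c n) / n) := by
  have hD : 0 < D := by simpa using (hc 0).trans_le (hexp 0)
  have hB : 0 < B := pos_of_mul_pos_right (by simpa using (hc 1).trans_le (hexp 1)) hD.le
  refine ⟨|Real.log D| + |Real.log B|, ?_⟩
  rintro _ ⟨n, rfl⟩
  rcases n.eq_zero_or_pos with rfl | hn
  · simpa only [Nat.cast_zero, div_zero] using by positivity
  have hn' : (1 : ℝ) ≤ n := by exact_mod_cast hn
  refine (div_le_iff₀ (one_pos.trans_le hn')).2 ?_
  calc Real.log (c n) ≤ Real.log (D * B ^ n) := Real.log_le_log (hc n) (hexp n)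
    _ = Real.log D + n * Real.log B := by
      rw [Real.log_mul hD.ne' (pow_pos hB n).ne', Real.log_pow]
    _ ≤ |Real.log D| * n + n * |Real.log B| := by
      gcongr
      · exact (le_abs_self _).trans (le_mul_of_one_le_right (abs_nonneg _) hn')
      · exact le_abs_self _
    _ = (|Real.log D| + |Real.log B|) * n := by ring

theorem exists_tendsto_log_div_of_sandwich {c q : ℕ → ℝ} {a : ℕ} {K D B : ℝ}
    (hmono : Monotone q) (hq0 : 1 ≤ q 0) (hqc : ∀ m n, q m * q n ≤ c (m + n))
    (hcq : ∀ n, c n ≤ K * q (n + a)) (hexp : ∀ n, c n ≤ D * B ^ n) :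
    ∃ L, Tendsto (fun n : ℕ => Real.log (c n) / n) atTop (nhds L) := by
  have hq (n : ℕ) : 0 < q n := one_pos.trans_le (hq0.trans (hmono n.zero_le))
  have hc (n : ℕ) : 0 < c n :=
    (mul_pos (hq 0) (hq n)).trans_le (by simpa only [zero_add] using hqc 0 n)
  have hK : 0 < K := pos_of_mul_pos_left ((hc 0).trans_le (hcq 0)) (hq _).le
  refine exists_tendsto_div_of_sandwich (f := fun n => Real.log (q n)) (a := a) (C := Real.log K)
    (fun m n hmn => Real.log_le_log (hq m) (hmono hmn)) (Real.log_nonneg hq0) (fun m n => ?_)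
    (fun n => ?_) (bddAbove_range_log_div hc hexp)
  · rw [← Real.log_mul (hq m).ne' (hq n).ne']
    exact Real.log_le_log (mul_pos (hq m) (hq n)) (hqc m n)
  · rw [add_comm, ← Real.log_mul hK.ne' (hq _).ne']
    exact Real.log_le_log (hc n) (hcq n)

theorem tendsto_rpow_one_div_of_tendsto_log_div {c : ℕ → ℝ} {L : ℝ}
    (hc : ∀ᶠ n in atTop, 0 < c n)
    (hL : Tendsto (fun n : ℕ => Real.log (c n) / n) atTop (nhds L)) :
    Tendsto (fun n : ℕ => c n ^ (1 / (n : ℝ))) atTop (nhds (Real.exp L)) := by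
  refine ((Real.continuous_exp.tendsto L).comp hL).congr' ?_
  filter_upwards [hc] with n hn
  rw [Function.comp_apply, Real.rpow_def_of_pos hn, mul_one_div]

end Limits

section Covering

variable {α : Type*} {R : α → α → Prop}

theorem exists_rel_mem_notMem {M A : Finset α} {r : α} (hr : r ∈ A)
    (hconn : ∀ b ∈ M, Relation.ReflTransGen (fun x y => x ∈ M ∧ y ∈ M ∧ R x y) r b)
    (hMA : ¬ M ⊆ A) : ∃ p ∈ A, ∃ q ∈ M, q ∉ A ∧ R p q := by
  by_contra! hclosed
  refine hMA fun b hb => ?_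
  induction hconn b hb with
  | refl => exact hr
  | tail _ hxy ih =>
    by_contra hy
    exact hclosed _ (ih hxy.1) _ hxy.2.1 hy hxy.2.2

theorem exists_isChain_insert [DecidableEq α] (hR : ∀ ⦃x y⦄, R x y → R y x) {l : List α}
    (hl : l.IsChain R) {p q : α} (hp : p ∈ l) (hpq : R p q) :
    ∃ l' : List α, l'.length = l.length + 2 ∧ l'.IsChain R ∧
      l'.toFinset = insert q l.toFinset := by
  obtain ⟨l₁, l₂, rfl⟩ := List.append_of_mem hp
  refine ⟨l₁ ++ p :: q :: p :: l₂, by grind, ?_, by ext; grind [List.mem_toFinset]⟩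
  rw [List.isChain_split] at hl ⊢
  exact ⟨hl.1, .cons_cons hpq (.cons_cons (hR hpq) hl.2)⟩

-- Walk around a spanning tree, entering and leaving each new vertex through its parent.
theorem exists_isChain_toFinset_eq [DecidableEq α] (hR : ∀ ⦃x y⦄, R x y → R y x) {M : Finset α}
    (hconn : ∀ a ∈ M, ∀ b ∈ M, Relation.ReflTransGen (fun x y => x ∈ M ∧ y ∈ M ∧ R x y) a b)
    {n : ℕ} (hM : M.card = n + 1) :
    ∃ l : List α, l.length = 2 * n + 1 ∧ l.IsChain R ∧ l.toFinset = M := by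
  suffices hpartial : ∀ m ≤ n, ∃ l : List α, l.length = 2 * m + 1 ∧ l.IsChain R ∧
      l.toFinset ⊆ M ∧ l.toFinset.card = m + 1 by
    obtain ⟨l, hlen, hchain, hsub, hcard⟩ := hpartial n le_rfl
    exact ⟨l, hlen, hchain, Finset.eq_of_subset_of_card_le hsub (by omega)⟩
  intro m hm
  induction m with
  | zero =>
    obtain ⟨r, hr⟩ : M.Nonempty := Finset.card_pos.1 (by omega)
    exact ⟨[r], rfl, .singleton r, by simpa using hr, rfl⟩
  | succ m ih =>
    obtain ⟨l, hlen, hchain, hsub, hcard⟩ := ih (by omega)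
    obtain ⟨r, hr⟩ : l.toFinset.Nonempty := Finset.card_pos.1 (by omega)
    have hMl : ¬ M ⊆ l.toFinset := fun h => by
      have := Finset.card_le_card h
      omega
    obtain ⟨p, hp, q, hqM, hql, hpq⟩ := exists_rel_mem_notMem hr (hconn r (hsub hr)) hMl
    obtain ⟨l', hlen', hchain', hl'⟩ :=
      exists_isChain_insert hR hchain (List.mem_toFinset.1 hp) hpq
    refine ⟨l', by omega, hchain', ?_, ?_⟩
    · exact hl' ▸ Finset.insert_subset hqM hsub
    · rw [hl', Finset.card_insert_of_notMem hql, hcard]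

end Covering

section Faces

variable {d : ℕ} {i : Fin d} {e f g : Face d}

theorem mem_faceEdges :
    e ∈ faceEdges f ↔ ∃ j ∈ f.1, e.1 = f.1.erase j ∧ (e.2 = f.2 ∨ e.2 = f.2 + Pi.single j 1) := by
  simp only [faceEdges, Finset.mem_biUnion, Finset.mem_insert, Finset.mem_singleton, Prod.ext_iff,
    ← and_or_left]

theorem FaceAdj.symm (h : FaceAdj f g) : FaceAdj g f :=
  let ⟨hne, e, hf, hg⟩ := h
  ⟨hne.symm, e, hg, hf⟩

theorem faceAdj_add_single {S : Finset (Fin d)} (hi : i ∈ S) (v : Fin d → ℤ) :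
    FaceAdj (S, v) (S, v + Pi.single i 1) := by
  refine ⟨fun h => ?_, (S.erase i, v + Pi.single i 1), mem_faceEdges.2 ⟨i, hi, rfl, .inr rfl⟩,
    mem_faceEdges.2 ⟨i, hi, rfl, .inl rfl⟩⟩
  simpa using congrFun (congrArg Prod.snd h) i

/-- The largest `i`-th coordinate of a point of the face `f`; the smallest one is `f.2 i`. -/
def topLevel (i : Fin d) (f : Face d) : ℤ := f.2 i + if i ∈ f.1 then 1 else 0

theorem topLevel_of_mem (h : i ∈ f.1) : topLevel i f = f.2 i + 1 := by
  rw [topLevel, if_pos h]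

theorem topLevel_of_notMem (h : i ∉ f.1) : topLevel i f = f.2 i := by
  rw [topLevel, if_neg h, add_zero]

theorem le_topLevel (i : Fin d) (f : Face d) : f.2 i ≤ topLevel i f := by
  unfold topLevel
  split_ifs <;> omega

theorem topLevel_le_add_one (i : Fin d) (f : Face d) : topLevel i f ≤ f.2 i + 1 := by
  unfold topLevel
  split_ifs <;> omega

theorem apply_le_of_mem_faceEdges (i : Fin d) (h : e ∈ faceEdges f) : f.2 i ≤ e.2 i := by
  obtain ⟨j, -, -, he | he⟩ := mem_faceEdges.1 h
  · rw [he]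
  · rw [he, Pi.add_apply, Pi.single_apply]
    split_ifs <;> omega

theorem topLevel_le_of_mem_faceEdges (i : Fin d) (h : e ∈ faceEdges f) :
    topLevel i e ≤ topLevel i f := by
  obtain ⟨j, hj, he₁, he₂⟩ := mem_faceEdges.1 h
  rw [topLevel, topLevel, he₁]
  rcases he₂ with he₂ | he₂ <;> rw [he₂]
  · grind
  · grind [Pi.add_apply]

theorem eq_of_mem_faceEdges_of_lt (h : e ∈ faceEdges f) (hlt : f.2 i < e.2 i) :
    f = (insert i e.1, e.2 - Pi.single i 1) := by
  obtain ⟨j, hj, he₁, he₂ | he₂⟩ := mem_faceEdges.1 h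
  · exact absurd (congrFun he₂ i) hlt.ne'
  · obtain rfl : i = j := by
      by_contra hij
      rw [he₂, Pi.add_apply, Pi.single_eq_of_ne hij, add_zero] at hlt
      exact lt_irrefl _ hlt
    rw [he₁, he₂, Finset.insert_erase hj, add_sub_cancel_right]

theorem eq_of_mem_faceEdges_of_eq (h : e ∈ faceEdges f) (hf : i ∈ f.1) (he : i ∉ e.1)
    (heq : e.2 i = f.2 i) : f = (insert i e.1, e.2) := by
  obtain ⟨j, hj, he₁, he₂⟩ := mem_faceEdges.1 h
  obtain rfl : i = j := by
    by_contra hij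
    exact he (he₁ ▸ Finset.mem_erase.2 ⟨hij, hf⟩)
  rcases he₂ with he₂ | he₂
  · rw [he₁, he₂, Finset.insert_erase hj]
  · simp [he₂] at heq

end Faces

section Manifolds

variable {d k m n : ℕ} {A B M N P : Finset (Face d)} {a b e f : Face d}

/-- The number of faces of `M` having `e` as a boundary edge; it is at most two in a
self-avoiding manifold. -/
def edgeDegree (M : Finset (Face d)) (e : Face d) : ℕ := (M.filter fun f => e ∈ faceEdges f).card

theorem edgeDegree_mono (h : M ⊆ N) (e : Face d) : edgeDegree M e ≤ edgeDegree N e :=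
  Finset.card_le_card (Finset.filter_subset_filter _ h)

theorem edgeDegree_union_le (M N : Finset (Face d)) (e : Face d) :
    edgeDegree (M ∪ N) e ≤ edgeDegree M e + edgeDegree N e := by
  rw [edgeDegree, Finset.filter_union]
  exact Finset.card_union_le _ _

theorem edgeDegree_eq_zero (h : ∀ f ∈ M, e ∉ faceEdges f) : edgeDegree M e = 0 :=
  Finset.card_eq_zero.2 (Finset.filter_eq_empty_iff.2 h)

theorem edgeDegree_le_one (f : Face d) (h : ∀ g ∈ M, e ∈ faceEdges g → g = f) :
    edgeDegree M e ≤ 1 :=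
  Finset.card_le_one_iff_subset_singleton.2 ⟨f, fun g hg =>
    Finset.mem_singleton.2 (h g (Finset.mem_filter.1 hg).1 (Finset.mem_filter.1 hg).2)⟩

theorem edgeDegree_singleton_le_one (f e : Face d) : edgeDegree {f} e ≤ 1 :=
  Finset.card_filter_le _ _

theorem edgeDegree_erase_lt (hf : f ∈ M) (he : e ∈ faceEdges f) :
    edgeDegree (M.erase f) e < edgeDegree M e := by
  rw [edgeDegree, Finset.filter_erase]
  exact Finset.card_erase_lt_of_mem (Finset.mem_filter.2 ⟨hf, he⟩)

/-- The adjacency of faces within `M`, whose reflexive transitive closure appears in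
`ConnectedFaces`. -/
def InnerAdj (M : Finset (Face d)) (a b : Face d) : Prop := a ∈ M ∧ b ∈ M ∧ FaceAdj a b

theorem InnerAdj.mono (h : M ⊆ N) (hab : InnerAdj M a b) : InnerAdj N a b :=
  ⟨h hab.1, h hab.2.1, hab.2.2⟩

theorem connectedFaces_of_forall_reflTransGen (r : Face d)
    (h : ∀ a ∈ M, Relation.ReflTransGen (InnerAdj M) r a) : ConnectedFaces M := by
  have : Std.Symm (InnerAdj M) := ⟨fun _ _ hab => ⟨hab.2.1, hab.1, hab.2.2.symm⟩⟩
  exact fun a ha b hb => (symm_of (Relation.ReflTransGen (InnerAdj M)) (h a ha)).trans (h b hb)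

theorem ConnectedFaces.reflTransGen (hM : ConnectedFaces M) (hMN : M ⊆ N) (ha : a ∈ M)
    (hb : b ∈ M) : Relation.ReflTransGen (InnerAdj N) a b :=
  Relation.ReflTransGen.mono (fun _ _ => InnerAdj.mono hMN) _ _ (hM a ha b hb)

theorem ConnectedFaces.union (hA : ConnectedFaces A) (hB : ConnectedFaces B) (ha : a ∈ A)
    (hb : b ∈ B) (hab : FaceAdj a b) : ConnectedFaces (A ∪ B) := by
  refine connectedFaces_of_forall_reflTransGen a fun c hc => ?_
  rcases Finset.mem_union.1 hc with hc | hc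
  · exact hA.reflTransGen Finset.subset_union_left ha hc
  · exact .head ⟨Finset.mem_union_left _ ha, Finset.mem_union_right _ hb, hab⟩
      (hB.reflTransGen Finset.subset_union_right hb hc)

theorem IsSAM.edgeDegree_le_two (hM : IsSAM d k n M) (e : Face d) : edgeDegree M e ≤ 2 :=
  hM.2.2.2 e

theorem isSAM_singleton (f : Face d) : IsSAM d f.1.card 1 {f} := by
  refine ⟨Finset.card_singleton f, fun g hg => by rw [Finset.mem_singleton.1 hg], ?_,
    fun e => (edgeDegree_singleton_le_one f e).trans one_le_two⟩
  exact connectedFaces_of_forall_reflTransGen f fun a ha => Finset.mem_singleton.1 ha ▸ .refl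

theorem IsSAM.union (hA : IsSAM d k m A) (hB : IsSAM d k n B) (hdisj : Disjoint A B) (ha : a ∈ A)
    (hb : b ∈ B) (hab : FaceAdj a b)
    (hshare : ∀ f ∈ A, ∀ g ∈ B, ∀ e ∈ faceEdges f, e ∈ faceEdges g →
      edgeDegree A e ≤ 1 ∧ edgeDegree B e ≤ 1) :
    IsSAM d k (m + n) (A ∪ B) := by
  refine ⟨?_, fun f hf => (Finset.mem_union.1 hf).elim (hA.2.1 f) (hB.2.1 f),
    hA.2.2.1.union hB.2.2.1 ha hb hab, fun e => (edgeDegree_union_le A B e).trans ?_⟩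
  · rw [Finset.card_union_of_disjoint hdisj, hA.1, hB.1]
  by_cases heA : ∃ f ∈ A, e ∈ faceEdges f
  · by_cases heB : ∃ g ∈ B, e ∈ faceEdges g
    · obtain ⟨f, hf, hef⟩ := heA
      obtain ⟨g, hg, heg⟩ := heB
      exact add_le_add (hshare f hf g hg e hef heg).1 (hshare f hf g hg e hef heg).2
    · push Not at heB
      rw [edgeDegree_eq_zero heB, add_zero]
      exact hA.edgeDegree_le_two e
  · push Not at heA
    rw [edgeDegree_eq_zero heA, zero_add]
    exact hB.edgeDegree_le_two e

theorem ConnectedFaces.replace (hM : ConnectedFaces M) (hP : ConnectedFaces P) (hf : f ∈ M)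
    (hdisj : Disjoint M P) {p : Face d} (hp : p ∈ P)
    (hsub : ∀ e ∈ faceEdges f, ∃ g ∈ P, e ∈ faceEdges g) :
    ConnectedFaces (M.erase f ∪ P) := by
  refine connectedFaces_of_forall_reflTransGen p fun b hb => ?_
  have hreach {q : Face d} (hq : q ∈ P) : Relation.ReflTransGen (InnerAdj (M.erase f ∪ P)) p q :=
    hP.reflTransGen Finset.subset_union_right hp hq
  rcases Finset.mem_union.1 hb with hb | hb
  swap
  · exact hreach hb
  suffices ∀ c, Relation.ReflTransGen (InnerAdj M) f c → c ≠ f →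
      Relation.ReflTransGen (InnerAdj (M.erase f ∪ P)) p c from
    this b (hM f hf b (Finset.mem_of_mem_erase hb)) (Finset.ne_of_mem_erase hb)
  intro c hc
  induction hc with
  | refl => exact fun h => absurd rfl h
  | @tail x y _ hxy ih =>
    obtain ⟨hx, hy, hne, e, hex, hey⟩ := hxy
    intro hyf
    have hyN : y ∈ M.erase f ∪ P := Finset.mem_union_left _ (Finset.mem_erase.2 ⟨hyf, hy⟩)
    by_cases hxf : x = f
    · obtain ⟨g, hg, heg⟩ := hsub e (hxf ▸ hex)
      have hgy : g ≠ y := fun h => Finset.disjoint_left.1 hdisj hy (h ▸ hg)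
      exact (hreach hg).tail ⟨Finset.mem_union_right _ hg, hyN, hgy, e, heg, hey⟩
    · have hxN : x ∈ M.erase f ∪ P := Finset.mem_union_left _ (Finset.mem_erase.2 ⟨hxf, hx⟩)
      exact (ih hxf).tail ⟨hxN, hyN, hne, e, hex, hey⟩

theorem IsSAM.replace (hM : IsSAM d k (n + 1) M) (hP : IsSAM d k m P) (hf : f ∈ M)
    (hdisj : Disjoint M P) {p : Face d} (hp : p ∈ P)
    (hsub : ∀ e ∈ faceEdges f, ∃ g ∈ P, e ∈ faceEdges g)
    (hshare : ∀ g ∈ M, ∀ q ∈ P, ∀ e ∈ faceEdges g, e ∈ faceEdges q →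
      e ∈ faceEdges f ∧ edgeDegree P e ≤ 1) :
    IsSAM d k (n + m) (M.erase f ∪ P) := by
  have hsubM : M.erase f ⊆ M := Finset.erase_subset f M
  refine ⟨?_, ?_, hM.2.2.1.replace hP.2.2.1 hf hdisj hp hsub,
    fun e => (edgeDegree_union_le _ P e).trans ?_⟩
  · rw [Finset.card_union_of_disjoint (hdisj.mono_left hsubM), Finset.card_erase_of_mem hf, hM.1,
      hP.1, Nat.add_sub_cancel]
  · exact fun g hg => (Finset.mem_union.1 hg).elim (fun hg => hM.2.1 g (hsubM hg)) (hP.2.1 g)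
  have hMe := hM.edgeDegree_le_two e
  by_cases heM : ∃ g ∈ M, e ∈ faceEdges g
  · by_cases heP : ∃ q ∈ P, e ∈ faceEdges q
    · obtain ⟨g, hg, heg⟩ := heM
      obtain ⟨q, hq, heq⟩ := heP
      obtain ⟨hef, hPe⟩ := hshare g hg q hq e heg heq
      have := edgeDegree_erase_lt hf hef
      omega
    · push Not at heP
      rw [edgeDegree_eq_zero heP, add_zero]
      exact (edgeDegree_mono hsubM e).trans hMe
  · push Not at heM
    rw [edgeDegree_eq_zero fun g hg => heM g (hsubM hg), zero_add]
    exact hP.edgeDegree_le_two e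

end Manifolds

section Symmetries

variable {d k n : ℕ} {i : Fin d} {M : Finset (Face d)} {e f : Face d} {φ : Face d ≃ Face d}

/-- A bijection of the faces of all dimensions which preserves dimension and incidence. -/
structure IsFaceSymm (φ : Face d ≃ Face d) : Prop where
  card_fst (f : Face d) : (φ f).1.card = f.1.card
  mem_faceEdges_iff (e f : Face d) : φ e ∈ faceEdges (φ f) ↔ e ∈ faceEdges f

theorem IsFaceSymm.edgeDegree_image (hφ : IsFaceSymm φ) (M : Finset (Face d)) (e : Face d) :
    edgeDegree (M.image φ) (φ e) = edgeDegree M e := by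
  simp only [edgeDegree, Finset.filter_image, hφ.mem_faceEdges_iff]
  exact Finset.card_image_of_injective _ φ.injective

theorem IsFaceSymm.faceAdj {g : Face d} (hφ : IsFaceSymm φ) (h : FaceAdj f g) :
    FaceAdj (φ f) (φ g) :=
  let ⟨hne, e, hf, hg⟩ := h
  ⟨φ.injective.ne hne, φ e, (hφ.mem_faceEdges_iff e f).2 hf, (hφ.mem_faceEdges_iff e g).2 hg⟩

theorem IsFaceSymm.isSAM_image (hφ : IsFaceSymm φ) (hM : IsSAM d k n M) :
    IsSAM d k n (M.image φ) := by
  refine ⟨(Finset.card_image_of_injective M φ.injective).trans hM.1, ?_, ?_, fun e => ?_⟩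
  · exact Finset.forall_mem_image.2 fun f hf => (hφ.card_fst f).trans (hM.2.1 f hf)
  · refine Finset.forall_mem_image.2 fun a ha => Finset.forall_mem_image.2 fun b hb =>
      (hM.2.2.1 a ha b hb).lift φ fun x y hxy => ?_
    exact ⟨Finset.mem_image_of_mem φ hxy.1, Finset.mem_image_of_mem φ hxy.2.1,
      hφ.faceAdj hxy.2.2⟩
  · obtain ⟨e, rfl⟩ := φ.surjective e
    exact (hφ.edgeDegree_image M e).trans_le (hM.edgeDegree_le_two e)

/-- Translation of faces by `t`, as a permutation of the set of faces. -/
def translateEquiv (t : Fin d → ℤ) : Face d ≃ Face d where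
  toFun := translateFace t
  invFun := translateFace (-t)
  left_inv f := by simp [translateFace]
  right_inv f := by simp [translateFace]

theorem isFaceSymm_translateEquiv (t : Fin d → ℤ) : IsFaceSymm (translateEquiv t) where
  card_fst _ := rfl
  mem_faceEdges_iff e f := by
    simp only [mem_faceEdges, translateEquiv, Equiv.coe_fn_mk, translateFace, add_left_inj,
      add_right_comm _ t]

theorem IsSAM.translate (hM : IsSAM d k n M) (t : Fin d → ℤ) :
    IsSAM d k n (M.image (translateFace t)) :=
  (isFaceSymm_translateEquiv t).isSAM_image hM

theorem translateFace_apply (i : Fin d) (t : Fin d → ℤ) (f : Face d) :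
    (translateFace t f).2 i = f.2 i + t i := rfl

theorem topLevel_translateFace (i : Fin d) (t : Fin d → ℤ) (f : Face d) :
    topLevel i (translateFace t f) = topLevel i f + t i :=
  add_right_comm _ _ _

theorem image_translateFace_zero (M : Finset (Face d)) : M.image (translateFace 0) = M := by
  have : translateFace (0 : Fin d → ℤ) = id := funext fun f => congrArg (Prod.mk f.1) (add_zero f.2)
  rw [this, Finset.image_id]

theorem image_translateFace_add (s t : Fin d → ℤ) (M : Finset (Face d)) :
    (M.image (translateFace s)).image (translateFace t) = M.image (translateFace (s + t)) := by
  rw [Finset.image_image]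
  exact Finset.image_congr fun f _ => congrArg (Prod.mk f.1) (add_assoc f.2 s t)

theorem equivalence_transEquiv : Equivalence (TransEquiv (d := d)) where
  refl A := ⟨0, image_translateFace_zero A⟩
  symm := by
    rintro A _ ⟨t, rfl⟩
    exact ⟨-t, by rw [image_translateFace_add, add_neg_cancel, image_translateFace_zero]⟩
  trans := by
    rintro A _ _ ⟨s, rfl⟩ ⟨t, rfl⟩
    exact ⟨s + t, (image_translateFace_add s t A).symm⟩

/-- Reflection of faces in the hyperplane on which the `i`-th coordinate vanishes. -/
def reflect (i : Fin d) (f : Face d) : Face d := (f.1, Function.update f.2 i (-topLevel i f))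

theorem reflect_apply_self (i : Fin d) (f : Face d) : (reflect i f).2 i = -topLevel i f :=
  Function.update_self ..

theorem topLevel_reflect (i : Fin d) (f : Face d) : topLevel i (reflect i f) = -f.2 i := by
  rw [topLevel, reflect_apply_self, topLevel, reflect]
  ring

theorem reflect_involutive (i : Fin d) : Function.Involutive (reflect i) := fun f => by
  rw [reflect, topLevel_reflect, neg_neg]
  simp [reflect]

theorem reflect_mem_faceEdges (i : Fin d) (h : e ∈ faceEdges f) :
    reflect i e ∈ faceEdges (reflect i f) := by
  obtain ⟨j, hj, he₁, he₂⟩ := mem_faceEdges.1 h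
  refine mem_faceEdges.2 ⟨j, hj, he₁, ?_⟩
  simp only [reflect, topLevel, he₁]
  rcases eq_or_ne j i with rfl | hji
  · refine he₂.symm.imp (fun he₂ => ?_) (fun he₂ => ?_) <;> ext l <;>
      rcases eq_or_ne l j with rfl | hlj <;> simp [*]
  · refine he₂.imp (fun he₂ => ?_) (fun he₂ => ?_) <;> ext l <;>
      rcases eq_or_ne l i with rfl | hli <;> simp [*, hji.symm]

/-- The reflection `reflect i` as a permutation of the set of faces. -/
def reflectEquiv (i : Fin d) : Face d ≃ Face d := (reflect_involutive i).toPerm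

theorem isFaceSymm_reflectEquiv (i : Fin d) : IsFaceSymm (reflectEquiv i) where
  card_fst _ := rfl
  mem_faceEdges_iff e f := by
    refine ⟨fun h => ?_, reflect_mem_faceEdges i⟩
    simpa only [reflect_involutive i e, reflect_involutive i f] using
      reflect_mem_faceEdges i (show reflect i e ∈ faceEdges (reflect i f) from h)

/-- Permutation of the coordinate axes: `σ` sends the `j`-th axis to the `σ j`-th one. -/
def permuteEquiv (σ : Equiv.Perm (Fin d)) : Face d ≃ Face d :=
  σ.finsetCongr.prodCongr (σ.arrowCongr (Equiv.refl ℤ))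

theorem permuteEquiv_apply (σ : Equiv.Perm (Fin d)) (f : Face d) :
    permuteEquiv σ f = (f.1.map σ.toEmbedding, f.2 ∘ σ.symm) := rfl

theorem isFaceSymm_permuteEquiv (σ : Equiv.Perm (Fin d)) : IsFaceSymm (permuteEquiv σ) where
  card_fst f := Finset.card_map _
  mem_faceEdges_iff e f := by
    have hshift (j : Fin d) : f.2 ∘ σ.symm + Pi.single (σ j) 1 =
        (f.2 + Pi.single j 1) ∘ σ.symm := by
      ext l
      simp [Pi.single_apply, Equiv.symm_apply_eq]
    have herase (j : Fin d) : (f.1.map σ.toEmbedding).erase (σ j) =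
        (f.1.erase j).map σ.toEmbedding := (Finset.map_erase σ.toEmbedding f.1 j).symm
    simp only [mem_faceEdges, permuteEquiv_apply, Finset.mem_map, exists_exists_and_eq_and,
      Equiv.coe_toEmbedding, hshift, herase, Finset.map_inj,
      σ.symm.surjective.injective_comp_right.eq_iff]

theorem topLevel_permuteEquiv {σ : Equiv.Perm (Fin d)} (hσ : σ i = i) (f : Face d) :
    topLevel i (permuteEquiv σ f) = topLevel i f := by
  have : σ.symm i = i := by rw [Equiv.symm_apply_eq, hσ]
  simp [topLevel, permuteEquiv_apply, this]

end Symmetries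

section SideFaces

variable {d k n : ℕ} {i j : Fin d} {C e f g : Face d}

theorem card_fst_of_mem_faceEdges (h : e ∈ faceEdges f) : e.1.card + 1 = f.1.card := by
  obtain ⟨j, hj, he, -⟩ := mem_faceEdges.1 h
  rw [he, Finset.card_erase_add_one hj]

theorem fst_subset_of_mem_faceEdges (h : e ∈ faceEdges f) : e.1 ⊆ f.1 := by
  obtain ⟨j, -, he, -⟩ := mem_faceEdges.1 h
  exact he ▸ Finset.erase_subset j f.1

theorem snd_apply_of_mem_faceEdges (h : e ∈ faceEdges f) (hj : j ∉ f.1 ∨ j ∈ e.1) :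
    e.2 j = f.2 j := by
  obtain ⟨l, hl, he₁, he₂ | he₂⟩ := mem_faceEdges.1 h
  · rw [he₂]
  · have hjl : j ≠ l := by grind
    rw [he₂, Pi.add_apply, Pi.single_eq_of_ne hjl, add_zero]

theorem faceAdj_of_mem_faceEdges (hf : f ∈ faceEdges C) (hg : g ∈ faceEdges C)
    (hfg : f.1 ≠ g.1) : FaceAdj f g := by
  obtain ⟨j, hj, hf₁, hf₂⟩ := mem_faceEdges.1 hf
  obtain ⟨l, hl, hg₁, hg₂⟩ := mem_faceEdges.1 hg
  have hjl : j ≠ l := by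
    rintro rfl
    exact hfg (hf₁.trans hg₁.symm)
  refine ⟨ne_of_apply_ne Prod.fst hfg, (f.1.erase l, f.2 + g.2 - C.2), mem_faceEdges.2 ⟨l, ?_⟩,
    mem_faceEdges.2 ⟨j, ?_⟩⟩
  · refine ⟨hf₁ ▸ Finset.mem_erase.2 ⟨hjl.symm, hl⟩, rfl, hg₂.imp (fun hg₂ => ?_) fun hg₂ => ?_⟩ <;>
      simp only [hg₂] <;> abel
  · refine ⟨hg₁ ▸ Finset.mem_erase.2 ⟨hjl, hj⟩, ?_, hf₂.imp (fun hf₂ => ?_) fun hf₂ => ?_⟩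
    · rw [hf₁, hg₁, Finset.erase_right_comm]
    all_goals simp only [hf₂]; abel

-- A facet of `C` through `e` is normal to one of the two directions in which `C` extends but `e`
-- does not, and its coordinate in that direction is that of `e`.
theorem edgeDegree_faceEdges_le_two (C e : Face d) : edgeDegree (faceEdges C) e ≤ 2 := by
  by_cases hempty : ∃ f ∈ faceEdges C, e ∈ faceEdges f
  swap
  · push Not at hempty
    exact (edgeDegree_eq_zero hempty).trans_le zero_le_two
  obtain ⟨f, hfC, hef⟩ := hempty
  have hcard : (C.1 \ e.1).card = 2 := by
    have hsub := (fst_subset_of_mem_faceEdges hef).trans (fst_subset_of_mem_faceEdges hfC)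
    have hf := card_fst_of_mem_faceEdges hfC
    have he := card_fst_of_mem_faceEdges hef
    rw [Finset.card_sdiff_of_subset hsub]
    omega
  rw [← hcard]
  refine (Finset.card_le_card fun g hg => ?_).trans (Finset.card_image_le
    (f := fun j => ((C.1.erase j, Function.update C.2 j (e.2 j)) : Face d)))
  obtain ⟨hgC, heg⟩ := Finset.mem_filter.1 hg
  obtain ⟨j, hj, hg₁, hg₂⟩ := mem_faceEdges.1 hgC
  have hjg : j ∉ g.1 := hg₁ ▸ Finset.notMem_erase j C.1
  refine Finset.mem_image.2 ⟨j, Finset.mem_sdiff.2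
    ⟨hj, fun h => hjg (fst_subset_of_mem_faceEdges heg h)⟩, ?_⟩
  rw [snd_apply_of_mem_faceEdges heg (.inl hjg)]
  refine Prod.ext hg₁.symm (Function.update_eq_iff.2 ⟨rfl, fun l hl => ?_⟩)
  rcases hg₂ with hg₂ | hg₂ <;> simp [hg₂, hl]

/-- The facets of the cube `C` which are parallel to the `i`-th axis. -/
def sideFaces (i : Fin d) (C : Face d) : Finset (Face d) := (faceEdges C).filter (i ∈ ·.1)

theorem sideFaces_subset (i : Fin d) (C : Face d) : sideFaces i C ⊆ faceEdges C :=
  Finset.filter_subset _ _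

theorem sideFaces_eq_biUnion (hi : i ∈ C.1) : sideFaces i C = (C.1.erase i).biUnion fun j =>
    {(C.1.erase j, C.2), (C.1.erase j, C.2 + Pi.single j 1)} := by
  ext f
  simp only [sideFaces, Finset.mem_filter, faceEdges, Finset.mem_biUnion, Finset.mem_insert,
    Finset.mem_singleton]
  grind

theorem snd_apply_of_mem_sideFaces (h : f ∈ sideFaces i C) : f.2 i = C.2 i :=
  snd_apply_of_mem_faceEdges (Finset.mem_filter.1 h).1 (.inr (Finset.mem_filter.1 h).2)

theorem topLevel_of_mem_sideFaces (h : f ∈ sideFaces i C) : topLevel i f = C.2 i + 1 := by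
  rw [topLevel_of_mem (Finset.mem_filter.1 h).2, snd_apply_of_mem_sideFaces h]

theorem disjoint_sideFaces {M : Finset (Face d)} (h : ∀ f ∈ M, topLevel i f ≤ C.2 i) :
    Disjoint M (sideFaces i C) := Finset.disjoint_left.2 fun f hf hfC => by
  have := h f hf
  have := topLevel_of_mem_sideFaces hfC
  omega

theorem erase_mem_sideFaces (hi : i ∈ C.1) (hj : j ∈ C.1) (hij : i ≠ j) :
    (C.1.erase j, C.2) ∈ sideFaces i C :=
  Finset.mem_filter.2 ⟨mem_faceEdges.2 ⟨j, hj, rfl, .inl rfl⟩, Finset.mem_erase.2 ⟨hij, hi⟩⟩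

theorem card_sideFaces (hi : i ∈ C.1) (hC : C.1.card = k + 1) :
    (sideFaces i C).card = 2 * k := by
  have hpair (j : Fin d) : ({(C.1.erase j, C.2), (C.1.erase j, C.2 + Pi.single j 1)} :
      Finset (Face d)).card = 2 := Finset.card_pair fun h => by
    simpa using congrFun (congrArg Prod.snd h) j
  rw [sideFaces_eq_biUnion hi, Finset.card_biUnion]
  · simp only [hpair, Finset.sum_const, Finset.card_erase_of_mem hi, hC, Nat.add_sub_cancel,
      smul_eq_mul, mul_comm]
  · intro j hj l hl hjl
    have : C.1.erase j ≠ C.1.erase l := fun h =>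
      hjl (Finset.erase_injOn C.1 (Finset.mem_of_mem_erase hj) (Finset.mem_of_mem_erase hl) h)
    simp [Finset.disjoint_left, this]

theorem connectedFaces_sideFaces (hi : i ∈ C.1) (hC : 2 < C.1.card) :
    ConnectedFaces (sideFaces i C) := by
  have hstep {a b : Face d} (ha : a ∈ sideFaces i C) (hb : b ∈ sideFaces i C) (hab : a.1 ≠ b.1) :
      InnerAdj (sideFaces i C) a b :=
    ⟨ha, hb, faceAdj_of_mem_faceEdges (sideFaces_subset i C ha) (sideFaces_subset i C hb) hab⟩
  intro f hf g hg
  by_cases hfg : f.1 = g.1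
  swap
  · exact .single (hstep hf hg hfg)
  obtain ⟨h, hh, hfh⟩ : ∃ h ∈ sideFaces i C, f.1 ≠ h.1 := by
    obtain ⟨j, hj, hf₁, -⟩ := mem_faceEdges.1 (sideFaces_subset i C hf)
    obtain ⟨l, hl, hl'⟩ := Finset.exists_mem_notMem_of_card_lt_card
      ((Finset.card_le_two (a := i) (b := j)).trans_lt hC)
    simp only [Finset.mem_insert, Finset.mem_singleton, not_or] at hl'
    refine ⟨(C.1.erase l, C.2), erase_mem_sideFaces hi hl (Ne.symm hl'.1), ?_⟩
    rw [hf₁]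
    exact fun h => hl'.2 (Finset.erase_injOn C.1 hj hl h).symm
  exact .tail (.single (hstep hf hh hfh)) (hstep hh hg (hfg ▸ hfh.symm))

theorem isSAM_sideFaces (hi : i ∈ C.1) (hC : C.1.card = k + 1) (hk : 1 < k) :
    IsSAM d k (2 * k) (sideFaces i C) := by
  refine ⟨card_sideFaces hi hC, fun f hf => ?_, connectedFaces_sideFaces hi (by omega), fun e =>
    (edgeDegree_mono (sideFaces_subset i C) e).trans (edgeDegree_faceEdges_le_two C e)⟩
  have := card_fst_of_mem_faceEdges (sideFaces_subset i C hf)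
  omega

theorem exists_mem_sideFaces_insert {S : Finset (Fin d)} {v : Fin d → ℤ} (hiS : i ∉ S)
    (he : e ∈ faceEdges (S, v)) : ∃ q ∈ sideFaces i (insert i S, v), e ∈ faceEdges q := by
  obtain ⟨j, hj, he₁, he₂⟩ := mem_faceEdges.1 he
  refine ⟨(insert i e.1, e.2), ?_, mem_faceEdges.2 ⟨i, Finset.mem_insert_self i _, ?_, .inl rfl⟩⟩
  · refine Finset.mem_filter.2 ⟨mem_faceEdges.2 ⟨j, Finset.mem_insert_of_mem hj, ?_, he₂⟩,
      Finset.mem_insert_self i _⟩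
    rw [he₁, Finset.erase_insert_of_ne (ne_of_mem_of_not_mem hj hiS).symm]
  · rw [Finset.erase_insert (he₁ ▸ fun h => hiS (Finset.mem_of_mem_erase h))]

theorem mem_faceEdges_of_insert_mem_sideFaces {S : Finset (Fin d)} {v : Fin d → ℤ} (hiS : i ∉ S)
    (hie : i ∉ e.1) (h : (insert i e.1, e.2) ∈ sideFaces i (insert i S, v)) :
    e ∈ faceEdges (S, v) := by
  obtain ⟨j, hj, he₁, he₂⟩ := mem_faceEdges.1 (sideFaces_subset _ _ h)
  dsimp only at hj he₁ he₂
  have hij : i ≠ j := (Finset.mem_erase.1 (he₁ ▸ Finset.mem_insert_self i e.1)).1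
  refine mem_faceEdges.2 ⟨j, Finset.mem_of_mem_insert_of_ne hj hij.symm, ?_, he₂⟩
  calc e.1 = (insert i e.1).erase i := (Finset.erase_insert hie).symm
    _ = ((insert i S).erase i).erase j := by rw [he₁, Finset.erase_right_comm]
    _ = S.erase j := by rw [Finset.erase_insert hiS]

theorem IsSAM.erase_union_sideFaces {M : Finset (Face d)} {S : Finset (Fin d)} {v : Fin d → ℤ}
    (hk : 1 < k) (hM : IsSAM d k (n + 1) M) (hSM : (S, v) ∈ M) (hiS : i ∉ S)
    (htop : ∀ f ∈ M, topLevel i f ≤ v i) :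
    IsSAM d k (n + 2 * k) (M.erase (S, v) ∪ sideFaces i (insert i S, v)) := by
  have hSk : S.card = k := hM.2.1 _ hSM
  have hiC : i ∈ insert i S := Finset.mem_insert_self i S
  have hP : IsSAM d k (2 * k) (sideFaces i (insert i S, v)) :=
    isSAM_sideFaces hiC (hSk ▸ Finset.card_insert_of_notMem hiS) hk
  obtain ⟨p, hp⟩ : (sideFaces i (insert i S, v)).Nonempty := Finset.card_pos.1 (hP.1 ▸ by omega)
  refine hM.replace hP hSM (disjoint_sideFaces htop) hp
    (fun e he => exists_mem_sideFaces_insert hiS he) fun g hg q hq e heg heq => ?_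
  have hev : e.2 i = v i :=
    le_antisymm (((le_topLevel i e).trans (topLevel_le_of_mem_faceEdges i heg)).trans (htop g hg))
      ((snd_apply_of_mem_sideFaces hq).ge.trans (apply_le_of_mem_faceEdges i heq))
  have hie : i ∉ e.1 := fun h => by
    have := (topLevel_le_of_mem_faceEdges i heg).trans (htop g hg)
    rw [topLevel_of_mem h] at this
    omega
  have hunique {r : Face d} (hr : r ∈ sideFaces i (insert i S, v)) (her : e ∈ faceEdges r) :
      r = (insert i e.1, e.2) :=
    eq_of_mem_faceEdges_of_eq her (Finset.mem_filter.1 hr).2 hie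
      (hev.trans (snd_apply_of_mem_sideFaces hr).symm)
  exact ⟨mem_faceEdges_of_insert_mem_sideFaces hiS hie (hunique hq heq ▸ hq),
    edgeDegree_le_one _ fun r hr her => hunique hr her⟩

end SideFaces

section Capped

variable {d k m n : ℕ} {i : Fin d} {S : Finset (Fin d)} {A B C D M : Finset (Face d)}
  {e f : Face d} {t : Fin d → ℤ}

/-- The reference face of orientation `S`: for `i ∈ S` it fills the layer between the levels `-1`
and `0` in direction `i`. -/
def capFace (i : Fin d) (S : Finset (Fin d)) : Face d := (S, Pi.single i (-1))

/-- A self-avoiding manifold which contains the face `capFace i S`, all of whose other faces lie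
in the half-space where the `i`-th coordinate is at most `-1`. -/
structure IsCapped (i : Fin d) (S : Finset (Fin d)) (k n : ℕ) (M : Finset (Face d)) : Prop where
  isSAM : IsSAM d k n M
  capFace_mem : capFace i S ∈ M
  topLevel_le : ∀ f ∈ M, f ≠ capFace i S → topLevel i f ≤ -1

theorem capFace_apply (i : Fin d) (S : Finset (Fin d)) : (capFace i S).2 i = -1 :=
  Pi.single_eq_same ..

theorem topLevel_capFace (hi : i ∈ S) : topLevel i (capFace i S) = 0 := by
  rw [topLevel_of_mem (f := capFace i S) hi, capFace_apply, neg_add_cancel]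

theorem capFace_add_single (i : Fin d) (S : Finset (Fin d)) :
    (capFace i S).2 + Pi.single i 1 = 0 := by
  rw [capFace, ← Pi.single_add, neg_add_cancel, Pi.single_zero]

theorem capFace_notMem (h : ∀ f ∈ M, f.2 i ≤ -2) : capFace i S ∉ M := fun hcap => by
  have := h _ hcap
  rw [capFace_apply] at this
  omega

theorem reflect_capFace (hi : i ∈ S) : reflect i (capFace i S) = (S, 0) := by
  rw [reflect, topLevel_capFace hi]
  refine Prod.ext rfl (Function.update_eq_iff.2 ⟨neg_zero, fun j hj => ?_⟩)
  exact Pi.single_eq_of_ne hj _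

theorem isCapped_singleton (i : Fin d) (S : Finset (Fin d)) :
    IsCapped i S S.card 1 {capFace i S} where
  isSAM := isSAM_singleton (capFace i S)
  capFace_mem := Finset.mem_singleton_self _
  topLevel_le _ hf hne := absurd (Finset.mem_singleton.1 hf) hne

theorem isCapped_insert_capFace (hi : i ∈ S) (hM : IsSAM d k n M)
    (hmem : (S, Pi.single i (-2)) ∈ M) (hlow : ∀ f ∈ M, f.2 i ≤ -2) :
    IsCapped i S k (n + 1) (insert (capFace i S) M) where
  isSAM := by
    have hcap : IsSAM d k 1 {capFace i S} := hM.2.1 _ hmem ▸ isSAM_singleton (capFace i S)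
    have hadj : FaceAdj (S, Pi.single i (-2)) (capFace i S) := by
      have : (Pi.single i (-1) : Fin d → ℤ) = Pi.single i (-2) + Pi.single i 1 := by
        rw [← Pi.single_add, show (-2 : ℤ) + 1 = -1 from rfl]
      rw [capFace, this]
      exact faceAdj_add_single hi _
    have hdisj : Disjoint {capFace i S} M := Finset.disjoint_singleton_left.2 (capFace_notMem hlow)
    rw [add_comm, Finset.insert_eq]
    refine hcap.union hM hdisj (Finset.mem_singleton_self _) hmem hadj.symm
      fun f hf g _ e hef _ => ⟨edgeDegree_singleton_le_one _ e, ?_⟩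
    refine edgeDegree_le_one (insert i e.1, e.2 - Pi.single i 1) fun r hr her =>
      eq_of_mem_faceEdges_of_lt her ?_
    have hre := hlow r hr
    have hfe := apply_le_of_mem_faceEdges i (Finset.mem_singleton.1 hf ▸ hef)
    rw [capFace_apply] at hfe
    omega
  capFace_mem := Finset.mem_insert_self _ _
  topLevel_le f hf hne := by
    have := hlow f (Finset.mem_of_mem_insert_of_ne hf hne)
    have := topLevel_le_add_one i f
    omega

theorem IsCapped.apply_neg (hM : IsCapped i S k n M) (hf : f ∈ M) : f.2 i < 0 := by
  rcases eq_or_ne f (capFace i S) with rfl | hne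
  · rw [capFace_apply]
    exact neg_one_lt_zero
  · have := hM.topLevel_le f hf hne
    have := le_topLevel i f
    omega

theorem IsCapped.topLevel_nonpos (hM : IsCapped i S k n M) (hf : f ∈ M) : topLevel i f ≤ 0 := by
  have := hM.apply_neg hf
  have := topLevel_le_add_one i f
  omega

theorem IsCapped.eq_capFace (hM : IsCapped i S k n M) (hf : f ∈ M) (h : 0 ≤ topLevel i f) :
    f = capFace i S := by
  by_contra hne
  have := hM.topLevel_le f hf hne
  omega

theorem IsCapped.edgeDegree_le_one (hM : IsCapped i S k n M) (he : 0 ≤ topLevel i e) :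
    edgeDegree M e ≤ 1 :=
  _root_.edgeDegree_le_one (capFace i S) fun _ hf hef =>
    hM.eq_capFace hf (he.trans (topLevel_le_of_mem_faceEdges i hef))

/-- The union of `A` and the mirror image of `B`. When `A` and `B` are capped, it is a
self-avoiding manifold in which the two caps meet along the mirror. -/
def glue (i : Fin d) (A B : Finset (Face d)) : Finset (Face d) := A ∪ B.image (reflect i)

theorem IsCapped.apply_nonneg_of_mem_image_reflect (hB : IsCapped i S k m B)
    (hf : f ∈ B.image (reflect i)) : 0 ≤ f.2 i := by
  obtain ⟨g, hg, rfl⟩ := Finset.mem_image.1 hf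
  rw [reflect_apply_self]
  exact neg_nonneg.2 (hB.topLevel_nonpos hg)

theorem IsCapped.isSAM_glue (hi : i ∈ S) (hA : IsCapped i S k n A) (hB : IsCapped i S k m B) :
    IsSAM d k (n + m) (glue i A B) := by
  have hB' : IsSAM d k m (B.image (reflect i)) := (isFaceSymm_reflectEquiv i).isSAM_image hB.isSAM
  have hdisj : Disjoint A (B.image (reflect i)) := Finset.disjoint_left.2 fun f hfA hfB =>
    (hA.apply_neg hfA).not_ge (hB.apply_nonneg_of_mem_image_reflect hfB)
  have hadj : FaceAdj (capFace i S) (reflect i (capFace i S)) := by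
    rw [reflect_capFace hi, ← capFace_add_single i S]
    exact faceAdj_add_single hi _
  refine hA.isSAM.union hB' hdisj hA.capFace_mem (Finset.mem_image_of_mem _ hB.capFace_mem) hadj
    fun f hf g hg e hef heg => ?_
  have he₀ : 0 ≤ e.2 i :=
    (hB.apply_nonneg_of_mem_image_reflect hg).trans (apply_le_of_mem_faceEdges i heg)
  have he₁ : topLevel i e ≤ 0 :=
    (topLevel_le_of_mem_faceEdges i hef).trans (hA.topLevel_nonpos hf)
  refine ⟨hA.edgeDegree_le_one (he₀.trans (le_topLevel i e)), ?_⟩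
  rw [← reflect_involutive i e]
  refine ((isFaceSymm_reflectEquiv i).edgeDegree_image B (reflect i e)).trans_le
    (hB.edgeDegree_le_one ?_)
  rw [topLevel_reflect]
  exact neg_nonneg.2 ((le_topLevel i e).trans he₁)

theorem IsCapped.filter_glue_neg (hA : IsCapped i S k n A) (hB : IsCapped i S k m B) :
    (glue i A B).filter (·.2 i < 0) = A := by
  rw [glue, Finset.filter_union, Finset.filter_true_of_mem fun f => hA.apply_neg,
    Finset.filter_false_of_mem fun f hf => (hB.apply_nonneg_of_mem_image_reflect hf).not_gt,
    Finset.union_empty]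

theorem IsCapped.filter_glue_nonneg (hA : IsCapped i S k n A) (hB : IsCapped i S k m B) :
    (glue i A B).filter (0 ≤ ·.2 i) = B.image (reflect i) := by
  rw [glue, Finset.filter_union, Finset.filter_false_of_mem fun f hf => (hA.apply_neg hf).not_ge,
    Finset.filter_true_of_mem fun f => hB.apply_nonneg_of_mem_image_reflect, Finset.empty_union]

-- Moving `glue i A B` upwards takes the cap of `A`, and so at least one of its `n` faces with
-- negative level, out of the negative half-space.
theorem IsCapped.apply_nonpos_of_image_glue_eq (hA : IsCapped i S k n A)
    (hB : IsCapped i S k m B) (hC : IsCapped i S k n C) (hD : IsCapped i S k m D)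
    (h : (glue i A B).image (translateFace t) = glue i C D) : t i ≤ 0 := by
  by_contra! ht
  have hsub : C ⊆ (A.erase (capFace i S)).image (translateFace t) := by
    rw [← hC.filter_glue_neg hD, ← h, Finset.filter_image]
    refine Finset.image_subset_image fun f hf => ?_
    obtain ⟨hf, hft⟩ := Finset.mem_filter.1 hf
    rw [translateFace_apply] at hft
    refine Finset.mem_erase.2 ⟨?_, ?_⟩
    · rintro rfl
      rw [capFace_apply] at hft
      omega
    · rw [← hA.filter_glue_neg hB]
      exact Finset.mem_filter.2 ⟨hf, by omega⟩
  have hcard := (Finset.card_le_card hsub).trans Finset.card_image_le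
  exact (Finset.card_erase_lt_of_mem hA.capFace_mem).not_ge
    (hA.isSAM.1.trans hC.isSAM.1.symm ▸ hcard)

theorem IsCapped.eq_zero_of_image_glue_eq (hi : i ∈ S) (hA : IsCapped i S k n A)
    (hB : IsCapped i S k m B) (hC : IsCapped i S k n C) (hD : IsCapped i S k m D)
    (h : (glue i A B).image (translateFace t) = glue i C D) : t = 0 := by
  have ht : t i = 0 := by
    refine le_antisymm (hA.apply_nonpos_of_image_glue_eq hB hC hD h) (neg_nonpos.1 ?_)
    refine hC.apply_nonpos_of_image_glue_eq hD hA hB (t := -t) ?_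
    rw [← h, image_translateFace_add, add_neg_cancel, image_translateFace_zero]
  have hmem : translateFace t (capFace i S) ∈ C := by
    rw [← hC.filter_glue_neg hD, ← h]
    refine Finset.mem_filter.2
      ⟨Finset.mem_image_of_mem _ (Finset.mem_union_left _ hA.capFace_mem), ?_⟩
    rw [translateFace_apply, ht, add_zero, capFace_apply]
    exact neg_one_lt_zero
  have hfix := hC.eq_capFace hmem
    (by rw [topLevel_translateFace, topLevel_capFace hi, ht, add_zero])
  exact add_eq_left.1 (congrArg Prod.snd hfix)

theorem IsCapped.eq_of_transEquiv_glue (hi : i ∈ S) (hA : IsCapped i S k n A)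
    (hB : IsCapped i S k m B) (hC : IsCapped i S k n C) (hD : IsCapped i S k m D)
    (h : TransEquiv (glue i A B) (glue i C D)) : A = C ∧ B = D := by
  obtain ⟨t, ht⟩ := h
  obtain rfl := hA.eq_zero_of_image_glue_eq hi hB hC hD ht
  rw [image_translateFace_zero] at ht
  constructor
  · rw [← hA.filter_glue_neg hB, ht, hC.filter_glue_neg hD]
  · refine Finset.image_injective (reflect_involutive i).injective ?_
    rw [← hA.filter_glue_nonneg hB, ht, hC.filter_glue_nonneg hD]

theorem IsCapped.apply_le_of_mem_image_translateFace (hM : IsCapped i S k n M) :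
    ∀ f ∈ M.image (translateFace (Pi.single i (-1))), f.2 i ≤ -2 :=
  Finset.forall_mem_image.2 fun f hf => by
    have := hM.apply_neg hf
    rw [translateFace_apply, Pi.single_eq_same]
    omega

theorem IsCapped.insert_capFace_image_translateFace (hi : i ∈ S) (hM : IsCapped i S k n M) :
    IsCapped i S k (n + 1)
      (insert (capFace i S) (M.image (translateFace (Pi.single i (-1))))) := by
  refine isCapped_insert_capFace hi (hM.isSAM.translate _) ?_ hM.apply_le_of_mem_image_translateFace
  refine Finset.mem_image.2 ⟨_, hM.capFace_mem, ?_⟩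
  rw [translateFace, capFace, ← Pi.single_add, show (-1 : ℤ) + -1 = -2 from rfl]

end Capped

section Classes

variable {d k m n : ℕ} {f g : Face d}

/-- The translation classes counted by `samCount`. -/
abbrev SAMClass (d k n : ℕ) :=
  Quot fun A B : {M : Finset (Face d) // IsSAM d k n M} => TransEquiv A.val B.val

theorem samClass_mk_eq_iff {A B : {M : Finset (Face d) // IsSAM d k n M}} :
    (Quot.mk _ A : SAMClass d k n) = Quot.mk _ B ↔ TransEquiv A.val B.val := by
  rw [Quot.eq, (equivalence_transEquiv.comap Subtype.val).eqvGen_iff]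

theorem exists_injective_samClass {X : Type*} (decode : X → Finset (Face d))
    (hdecode : ∀ M, IsSAM d k n M → ∃ x, TransEquiv M (decode x)) :
    ∃ code : SAMClass d k n → X, Function.Injective code := by
  choose code hcode using fun c : SAMClass d k n => hdecode _ (Quot.out c).2
  refine ⟨code, fun c c' h => ?_⟩
  rw [← Quot.out_eq c, ← Quot.out_eq c', samClass_mk_eq_iff]
  exact equivalence_transEquiv.trans (hcode c) (equivalence_transEquiv.symm (h ▸ hcode c'))

/-- A code for the passage from a face to an adjacent one: the new orientation, and a displacement
of the base vertex by at most one in each coordinate. -/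
abbrev FaceStep (d : ℕ) := Finset (Fin d) × (Fin d → Finset.Icc (-1 : ℤ) 1)

/-- The face reached from `f` by the step `s`. -/
def FaceStep.apply (f : Face d) (s : FaceStep d) : Face d := (s.1, fun i => f.2 i + s.2 i)

theorem exists_faceStep_apply_eq (h : FaceAdj f g) : ∃ s, FaceStep.apply f s = g := by
  obtain ⟨-, e, hf, hg⟩ := h
  have hstep {f : Face d} (i : Fin d) (he : e ∈ faceEdges f) :
      f.2 i ≤ e.2 i ∧ e.2 i ≤ f.2 i + 1 :=
    ⟨apply_le_of_mem_faceEdges i he, (le_topLevel i e).trans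
      ((topLevel_le_of_mem_faceEdges i he).trans (topLevel_le_add_one i f))⟩
  refine ⟨(g.1, fun i => ⟨g.2 i - f.2 i, Finset.mem_Icc.2 ?_⟩), ?_⟩
  · have := hstep i hf
    have := hstep i hg
    omega
  · exact Prod.ext rfl (funext fun i => add_sub_cancel _ _)

theorem exists_scanl_eq_of_isChain {l : List (Face d)} (hl : (f :: l).IsChain FaceAdj) :
    ∃ s : List (FaceStep d), s.length = l.length ∧ s.scanl FaceStep.apply f = f :: l := by
  induction l generalizing f with
  | nil => exact ⟨[], rfl, rfl⟩
  | cons g l ih =>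
    obtain ⟨hfg, hl⟩ := List.isChain_cons_cons.1 hl
    obtain ⟨s, hs⟩ := exists_faceStep_apply_eq hfg
    obtain ⟨t, htl, ht⟩ := ih hl
    exact ⟨s :: t, congrArg (· + 1) htl, by rw [List.scanl_cons, hs, ht]⟩

theorem exists_injective_samClass_walk (d k n : ℕ) :
    ∃ code : SAMClass d k (n + 1) → Finset (Fin d) × List.Vector (FaceStep d) (2 * n),
      Function.Injective code := by
  refine exists_injective_samClass
    (fun x => (x.2.toList.scanl FaceStep.apply (x.1, 0)).toFinset) fun M hM => ?_
  obtain ⟨l, hlen, hchain, rfl⟩ :=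
    exists_isChain_toFinset_eq (fun _ _ => FaceAdj.symm) hM.2.2.1 hM.1
  obtain ⟨f, l, rfl⟩ := List.exists_cons_of_length_eq_add_one hlen
  set τ := translateFace (-f.2)
  have hchain' : (τ f :: l.map τ).IsChain FaceAdj :=
    List.isChain_map_of_isChain τ (fun _ _ => (isFaceSymm_translateEquiv _).faceAdj) hchain
  have hf : τ f = (f.1, 0) := Prod.ext rfl (add_neg_cancel f.2)
  obtain ⟨s, hsl, hs⟩ := exists_scanl_eq_of_isChain hchain'
  refine ⟨(f.1, ⟨s, ?_⟩), -f.2, ?_⟩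
  · rw [hsl, List.length_map, Nat.succ.inj hlen]
  · rw [List.Vector.toList_mk, ← hf, hs, ← List.map_cons]
    ext
    simp only [Finset.mem_image, List.mem_toFinset, List.mem_map, τ]

theorem finite_samClass (d k n : ℕ) : Finite (SAMClass d k (n + 1)) :=
  let ⟨_, hcode⟩ := exists_injective_samClass_walk d k n
  .of_injective _ hcode

theorem samCount_succ_le (d k n : ℕ) :
    samCount d k (n + 1) ≤ Fintype.card (Finset (Fin d)) * Fintype.card (FaceStep d) ^ (2 * n) := by
  obtain ⟨_, hcode⟩ := exists_injective_samClass_walk d k n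
  refine (Nat.card_le_card_of_injective _ hcode).trans_eq ?_
  rw [Nat.card_eq_fintype_card, Fintype.card_prod, card_vector]

end Classes

section CappedCount

variable {d k m n : ℕ} {i : Fin d} {S T U : Finset (Fin d)} {M : Finset (Face d)}

/-- The capped self-avoiding manifolds. They are not taken up to translation, since the cap
fixes their position. -/
abbrev CappedSAM (i : Fin d) (S : Finset (Fin d)) (k n : ℕ) :=
  {M : Finset (Face d) // IsCapped i S k n M}

/-- The number of capped self-avoiding manifolds of area `n`. -/
noncomputable def cappedCount (i : Fin d) (S : Finset (Fin d)) (k n : ℕ) : ℕ :=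
  Nat.card (CappedSAM i S k n)

theorem exists_injective_glue (hi : i ∈ S) (k m n : ℕ) :
    ∃ F : CappedSAM i S k m × CappedSAM i S k n → SAMClass d k (m + n), Function.Injective F := by
  refine ⟨fun x => Quot.mk _ ⟨glue i x.1 x.2, x.1.2.isSAM_glue hi x.2.2⟩, fun x y hxy => ?_⟩
  have h := x.1.2.eq_of_transEquiv_glue hi x.2.2 y.1.2 y.2.2 (samClass_mk_eq_iff.1 hxy)
  exact Prod.ext (Subtype.ext h.1) (Subtype.ext h.2)

theorem finite_cappedSAM (hi : i ∈ S) (k n : ℕ) : Finite (CappedSAM i S k n) := by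
  cases isEmpty_or_nonempty (CappedSAM i S k n) with
  | inl => infer_instance
  | inr hne =>
    obtain ⟨M, hM⟩ := hne
    obtain ⟨n, rfl⟩ : ∃ m, n = m + 1 := Nat.exists_eq_add_one.2
      (hM.isSAM.1 ▸ Finset.card_pos.2 ⟨_, hM.capFace_mem⟩)
    obtain ⟨F, hF⟩ := exists_injective_glue hi k (n + 1) (n + 1)
    have := finite_samClass d k (n + 1 + n)
    exact .of_injective (fun A => F (A, ⟨M, hM⟩)) (hF.comp (Prod.mk_left_injective _))

theorem cappedCount_mul_cappedCount_le (hi : i ∈ S) (k m n : ℕ) :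
    cappedCount i S k (m + 1) * cappedCount i S k (n + 1) ≤ samCount d k (m + n + 2) := by
  obtain ⟨F, hF⟩ := exists_injective_glue hi k (m + 1) (n + 1)
  have := finite_samClass d k (m + 1 + n)
  rw [cappedCount, cappedCount, ← Nat.card_prod, show m + n + 2 = m + 1 + (n + 1) by omega]
  exact Nat.card_le_card_of_injective F hF

theorem one_le_cappedCount_one (hi : i ∈ S) : 1 ≤ cappedCount i S S.card 1 := by
  have := finite_cappedSAM hi S.card 1
  have : Nonempty (CappedSAM i S S.card 1) := ⟨⟨_, isCapped_singleton i S⟩⟩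
  exact Nat.card_pos

theorem monotone_cappedCount (hi : i ∈ S) (k : ℕ) : Monotone (cappedCount i S k) := by
  refine monotone_nat_of_le_succ fun n => ?_
  have := finite_cappedSAM hi k (n + 1)
  refine Nat.card_le_card_of_injective
    (fun M : CappedSAM i S k n =>
      (⟨_, M.2.insert_capFace_image_translateFace hi⟩ : CappedSAM i S k (n + 1)))
    fun A B hAB => Subtype.ext ?_
  have himage := congrArg (Finset.erase · (capFace i S)) (congrArg Subtype.val hAB)
  simp only [Finset.erase_insert (capFace_notMem A.2.apply_le_of_mem_image_translateFace),
    Finset.erase_insert (capFace_notMem B.2.apply_le_of_mem_image_translateFace)] at himage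
  exact Finset.image_injective (translateEquiv _).injective himage

theorem samCount_pos (hi : i ∈ S) (n : ℕ) : 0 < samCount d S.card (n + 2) := by
  have hone := one_le_cappedCount_one hi
  calc 0 < cappedCount i S S.card 1 * cappedCount i S S.card (n + 1) :=
        Nat.mul_pos hone (hone.trans (monotone_cappedCount hi _ (Nat.le_add_left 1 n)))
    _ ≤ samCount d S.card (0 + n + 2) := cappedCount_mul_cappedCount_le hi S.card 0 n
    _ = samCount d S.card (n + 2) := by rw [zero_add]

theorem exists_perm_map_eq {α : Type*} [Finite α] {a : α} {S T : Finset α}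
    (hT : a ∈ T) (hS : a ∈ S) (h : T.card = S.card) :
    ∃ σ : Equiv.Perm α, σ a = a ∧ T.map σ.toEmbedding = S := by
  classical
  cases nonempty_fintype α
  let ε : {x // x ∈ T} ≃ {x // x ∈ S} := Finset.equivOfCardEq h
  have hmem (x : α) (hx : x ∈ T) : ε.extendSubtype x ∈ S := ε.extendSubtype_mem x hx
  refine ⟨ε.extendSubtype.trans (Equiv.swap (ε.extendSubtype a) a), Equiv.swap_apply_left _ _,
    Finset.eq_of_subset_of_card_le ?_ (by rw [Finset.card_map, h])⟩
  refine Finset.map_subset_iff_subset_preimage.2 fun x hx => Finset.mem_preimage.2 ?_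
  rw [Equiv.toEmbedding_apply, Equiv.trans_apply, Equiv.swap_apply_def]
  split_ifs
  · exact hS
  · exact hmem a hT
  · exact hmem x hx

theorem permuteEquiv_capFace {σ : Equiv.Perm (Fin d)} (hσ : σ i = i) (T : Finset (Fin d)) :
    permuteEquiv σ (capFace i T) = capFace i (T.map σ.toEmbedding) := by
  refine Prod.ext rfl (funext fun j => ?_)
  simp [permuteEquiv_apply, capFace, Pi.single_apply, Equiv.symm_apply_eq, hσ]

theorem IsCapped.permute {σ : Equiv.Perm (Fin d)} (hσ : σ i = i) (hM : IsCapped i T k n M) :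
    IsCapped i (T.map σ.toEmbedding) k n (M.image (permuteEquiv σ)) where
  isSAM := (isFaceSymm_permuteEquiv σ).isSAM_image hM.isSAM
  capFace_mem := permuteEquiv_capFace hσ T ▸ Finset.mem_image_of_mem _ hM.capFace_mem
  topLevel_le := Finset.forall_mem_image.2 fun f hf hne => by
    rw [topLevel_permuteEquiv hσ]
    exact hM.topLevel_le f hf fun h => hne (h ▸ permuteEquiv_capFace hσ T)

theorem cappedCount_le_of_card_eq (hT : i ∈ T) (hS : i ∈ S) (h : T.card = S.card) (n : ℕ) :
    cappedCount i T S.card n ≤ cappedCount i S S.card n := by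
  obtain ⟨σ, hσ, rfl⟩ := exists_perm_map_eq hT hS h
  have := finite_cappedSAM hS (T.map σ.toEmbedding).card n
  exact Nat.card_le_card_of_injective (fun M => ⟨_, M.2.permute hσ⟩) fun A B hAB =>
    Subtype.ext (Finset.image_injective (permuteEquiv σ).injective (congrArg Subtype.val hAB))

end CappedCount

section Capping

variable {d k n : ℕ} {i : Fin d} {S T U : Finset (Fin d)} {M : Finset (Face d)}

theorem IsSAM.exists_transEquiv_top (i : Fin d) (hM : IsSAM d k (n + 1) M) :
    ∃ M', IsSAM d k (n + 1) M' ∧ TransEquiv M M' ∧ ∃ U, (U, Pi.single i (-2)) ∈ M' ∧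
      (i ∈ U ∧ (∀ g ∈ M', g.2 i ≤ -2) ∨ i ∉ U ∧ ∀ g ∈ M', topLevel i g ≤ -2) := by
  obtain ⟨f, hf, hmax⟩ := M.exists_max_image (fun g => g.2 i + topLevel i g)
    (Finset.card_pos.1 (hM.1 ▸ n.succ_pos))
  set t : Fin d → ℤ := Pi.single i (-2) - f.2
  have hti : t i = -2 - f.2 i := by simp [t]
  refine ⟨_, hM.translate t, ⟨t, rfl⟩, f.1, Finset.mem_image.2 ⟨f, hf, ?_⟩, ?_⟩
  · exact Prod.ext rfl (add_sub_cancel _ _)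
  simp only [Finset.forall_mem_image, translateFace_apply, topLevel_translateFace, hti]
  refine (em (i ∈ f.1)).imp (fun hi => ⟨hi, fun g hg => ?_⟩) fun hi => ⟨hi, fun g hg => ?_⟩
  · have := hmax g hg
    have := le_topLevel i g
    have := topLevel_of_mem hi
    omega
  · have := hmax g hg
    have := topLevel_le_add_one i g
    have := topLevel_of_notMem hi
    omega

/-- Inverts the two operations of replacing the face of orientation `U` by the side faces of the
cube standing on it, and of adding the cap of orientation `T`. -/
def flatten (i : Fin d) (T U : Finset (Fin d)) (N : Finset (Face d)) : Finset (Face d) :=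
  insert (U, Pi.single i (-2))
    (N.erase (capFace i T) \ sideFaces i (insert i U, Pi.single i (-2)))

theorem IsSAM.exists_isCapped_flatten_eq (hk : 1 < k) (hM : IsSAM d k (n + 1) M) (hU : i ∉ U)
    (hUM : (U, Pi.single i (-2)) ∈ M) (htop : ∀ g ∈ M, topLevel i g ≤ -2) :
    ∃ T N, i ∈ T ∧ IsCapped i T k (n + 2 * k + 1) N ∧ flatten i T U N = M := by
  set v : Fin d → ℤ := Pi.single i (-2)
  have hvi : v i = -2 := Pi.single_eq_same ..
  have hN := hM.erase_union_sideFaces hk hUM hU (hvi ▸ htop)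
  have hdisj : Disjoint (M.erase (U, v)) (sideFaces i (insert i U, v)) :=
    (disjoint_sideFaces fun f hf => (htop f hf).trans_eq hvi.symm).mono_left
      (Finset.erase_subset _ M)
  obtain ⟨j, hj⟩ : U.Nonempty := Finset.card_pos.1 (hM.2.1 _ hUM ▸ by omega)
  have hlow : ∀ g ∈ M.erase (U, v) ∪ sideFaces i (insert i U, v), g.2 i ≤ -2 := by
    intro g hg
    rcases Finset.mem_union.1 hg with hg | hg
    · exact (le_topLevel i g).trans (htop g (Finset.mem_of_mem_erase hg))
    · exact ((snd_apply_of_mem_sideFaces hg).trans hvi).le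
  have hij : i ≠ j := (ne_of_mem_of_not_mem hj hU).symm
  have hiC : i ∈ insert i U := Finset.mem_insert_self i U
  have hiT : i ∈ (insert i U).erase j := Finset.mem_erase.2 ⟨hij, hiC⟩
  have hside : ((insert i U).erase j, v) ∈ sideFaces i (insert i U, v) :=
    erase_mem_sideFaces hiC (Finset.mem_insert_of_mem hj) hij
  refine ⟨(insert i U).erase j, _, hiT,
    isCapped_insert_capFace hiT hN (Finset.mem_union_right _ hside) hlow, ?_⟩
  rw [flatten, Finset.erase_insert (capFace_notMem hlow),
    Finset.union_sdiff_cancel_right hdisj, Finset.insert_erase hUM]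

theorem exists_injective_samClass_capped (hk : 1 < k) (i : Fin d) (n : ℕ) :
    ∃ code : SAMClass d k (n + 1) → Σ T : {T : Finset (Fin d) // i ∈ T ∧ T.card = k},
      CappedSAM i T.1 k (n + 2) ⊕ Finset (Fin d) × CappedSAM i T.1 k (n + 2 * k + 1),
      Function.Injective code := by
  refine exists_injective_samClass (fun x => x.2.elim (fun N => N.1.erase (capFace i x.1.1))
    fun y => flatten i x.1.1 y.1 y.2.1) fun M hM => ?_
  obtain ⟨M', hM', hMM', U, hUM, ⟨hU, hlow⟩ | ⟨hU, htop⟩⟩ := hM.exists_transEquiv_top i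
  · refine ⟨⟨⟨U, hU, hM'.2.1 _ hUM⟩, .inl ⟨_, isCapped_insert_capFace hU hM' hUM hlow⟩⟩, ?_⟩
    rwa [Sum.elim_inl, Finset.erase_insert (capFace_notMem hlow)]
  · obtain ⟨T, N, hT, hN, rfl⟩ := hM'.exists_isCapped_flatten_eq hk hU hUM htop
    exact ⟨⟨⟨T, hT, hN.isSAM.2.1 _ hN.capFace_mem⟩, .inr (U, ⟨N, hN⟩)⟩, hMM'⟩

theorem exists_samCount_le_mul_cappedCount (hi : i ∈ S) (hS : 1 < S.card) :
    ∃ K : ℕ, ∀ n, samCount d S.card (n + 1) ≤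
      K * cappedCount i S S.card (n + 2 * S.card + 1) := by
  refine ⟨Fintype.card {T : Finset (Fin d) // i ∈ T ∧ T.card = S.card} *
    (1 + Fintype.card (Finset (Fin d))), fun n => ?_⟩
  obtain ⟨code, hcode⟩ := exists_injective_samClass_capped hS i n
  have hfin (T : {T : Finset (Fin d) // i ∈ T ∧ T.card = S.card}) (m : ℕ) :=
    finite_cappedSAM T.2.1 S.card m
  refine (Nat.card_le_card_of_injective code hcode).trans ?_
  rw [Nat.card_sigma, mul_assoc, ← Finset.card_univ, ← smul_eq_mul]
  refine Finset.sum_le_card_nsmul _ _ _ fun T _ => ?_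
  rw [Nat.card_sum, Nat.card_prod, Nat.card_eq_fintype_card (α := Finset (Fin d)), one_add_mul]
  have hle (m : ℕ) := cappedCount_le_of_card_eq T.2.1 hi T.2.2 m
  gcongr
  · exact (hle (n + 2)).trans (monotone_cappedCount hi _ (show n + 2 ≤ n + 2 * S.card + 1 by omega))
  · exact hle _

end Capping

theorem samCount_growth_constant_exists_general (d k : ℕ) (hk : 1 < k) (hkd : k ≤ d) :
    ∃ μ : ℝ, Tendsto (fun n : ℕ => (samCount d k n : ℝ) ^ (1 / (n : ℝ))) atTop (nhds μ) := by
  obtain ⟨S, -, rfl⟩ := Finset.exists_subset_card_eq (s := (Finset.univ : Finset (Fin d)))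
    (hkd.trans_eq (Finset.card_fin d).symm)
  obtain ⟨i, hi⟩ : S.Nonempty := Finset.card_pos.1 (one_pos.trans hk)
  obtain ⟨K, hK⟩ := exists_samCount_le_mul_cappedCount hi hk
  obtain ⟨L, hL⟩ := exists_tendsto_log_div_of_sandwich (a := 2 * S.card + 1) (K := K)
    (c := fun n => samCount d S.card (n + 2)) (q := fun n => cappedCount i S S.card (n + 1))
    (D := Fintype.card (Finset (Fin d)) * Fintype.card (FaceStep d) ^ 2)
    (B := Fintype.card (FaceStep d) ^ 2)
    (fun m n hmn => Nat.cast_le.2 (monotone_cappedCount hi _ (Nat.succ_le_succ hmn)))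
    (Nat.one_le_cast.2 (one_le_cappedCount_one hi))
    (fun m n => by exact_mod_cast cappedCount_mul_cappedCount_le hi S.card m n)
    (fun n => by exact_mod_cast (hK (n + 1)).trans_eq (by ring_nf))
    (fun n => by exact_mod_cast (samCount_succ_le d S.card (n + 1)).trans_eq (by ring))
  refine ⟨Real.exp L, tendsto_rpow_one_div_of_tendsto_log_div
    (eventually_atTop.2 ⟨2, fun n hn => ?_⟩) ((tendsto_add_div_nat_iff 2).1 hL)⟩
  obtain ⟨n, rfl⟩ := Nat.exists_eq_add_of_le' hn
  exact Nat.cast_pos.2 (samCount_pos hi n)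

theorem samCount_growth_constant_exists (d k : ℕ) (hk : 1 < k) (hkd : k < d) :
    ∃ μ : ℝ, Tendsto (fun n : ℕ => (samCount d k n : ℝ) ^ (1 / (n : ℝ))) atTop (nhds μ) :=
  samCount_growth_constant_exists_general d k hk hkd.le
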